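/- Let Ω ⊆ ℝ^n be a bounded open set with Lipschitz boundary, s ∈ (0,1), and let E ⊆ ℝ^n be measurable. The following are equivalent: (i) E is s-minimal in Ω; (ii) P_s(E,Ω) < ∞ and P_s(E,Ω) ≤ P_s(F,Ω) for every measurable F ⊆ ℝ^n with E Δ F ⊂⊂ Ω; (iii) E is locally s-minimal in Ω, i.e. E is s-minimal in every open Ω' ⊂⊂ Ω. -/

import Mathlib

open MeasureTheory Set Filter Topology Metric Bornology
open scoped ENNReal NNReal symmDiff

noncomputable def Ls (n : ℕ) (s : ℝ) (A B : Set (EuclideanSpace ℝ (Fin n))) : ℝ≥0∞ :=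
  ∫⁻ x in A, ∫⁻ y in B, ENNReal.ofReal (dist x y ^ (-((n : ℝ) + s)))

noncomputable def Ps (n : ℕ) (s : ℝ) (E Ω : Set (EuclideanSpace ℝ (Fin n))) : ℝ≥0∞ :=
  Ls n s (E ∩ Ω) (Eᶜ ∩ Ω) + Ls n s (E ∩ Ω) (Eᶜ \ Ω) + Ls n s (E \ Ω) (Eᶜ ∩ Ω)

def SMinimal (n : ℕ) (s : ℝ) (E Ω : Set (EuclideanSpace ℝ (Fin n))) : Prop :=
  Ps n s E Ω < ⊤ ∧ ∀ F : Set (EuclideanSpace ℝ (Fin n)), MeasurableSet F →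
    volume ((F \ Ω) ∆ (E \ Ω)) = 0 → Ps n s E Ω ≤ Ps n s F Ω

def LocSMinimal (n : ℕ) (s : ℝ) (E Ω : Set (EuclideanSpace ℝ (Fin n))) : Prop :=
  ∀ Ω' : Set (EuclideanSpace ℝ (Fin n)), IsOpen Ω' → IsCompact (closure Ω') →
    closure Ω' ⊆ Ω → SMinimal n s E Ω'

def HasLipschitzBoundary {n : ℕ} (Ω : Set (EuclideanSpace ℝ (Fin n))) : Prop :=
  ∀ x ∈ frontier Ω, ∃ (U : Set (EuclideanSpace ℝ (Fin n)))
    (_ : IsOpen U) (_ : x ∈ U)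
    (L : EuclideanSpace ℝ (Fin n) ≃ₗᵢ[ℝ] WithLp 2 (EuclideanSpace ℝ (Fin (n - 1)) × ℝ))
    (φ : EuclideanSpace ℝ (Fin (n - 1)) → ℝ) (K : NNReal),
    LipschitzWith K φ ∧
    Ω ∩ U = {y ∈ U | φ (WithLp.equiv 2 _ (L y)).1 < (WithLp.equiv 2 _ (L y)).2} ∧
    frontier Ω ∩ U = {y ∈ U | φ (WithLp.equiv 2 _ (L y)).1 = (WithLp.equiv 2 _ (L y)).2}


/-- The interaction kernel. -/
noncomputable def kerS (n : ℕ) (s : ℝ) (x y : EuclideanSpace ℝ (Fin n)) : ℝ≥0∞ :=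
  ENNReal.ofReal (dist x y ^ (-((n : ℝ) + s)))

lemma measurable_kerS (n : ℕ) (s : ℝ) :
    Measurable (fun p : EuclideanSpace ℝ (Fin n) × EuclideanSpace ℝ (Fin n) =>
      kerS n s p.1 p.2) := by
  unfold kerS
  exact ((measurable_fst.dist measurable_snd).pow_const _).ennreal_ofReal

lemma kerS_comm (n : ℕ) (s : ℝ) (x y : EuclideanSpace ℝ (Fin n)) :
    kerS n s x y = kerS n s y x := by
  unfold kerS; rw [dist_comm]

/-- The interaction measure on pairs. -/
noncomputable def kap (n : ℕ) (s : ℝ) :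
    Measure (EuclideanSpace ℝ (Fin n) × EuclideanSpace ℝ (Fin n)) :=
  (volume.prod volume).withDensity (fun p => kerS n s p.1 p.2)

lemma Ls_eq (n : ℕ) (s : ℝ) (A B : Set (EuclideanSpace ℝ (Fin n)))
    (hA : MeasurableSet A) (hB : MeasurableSet B) : Ls n s A B = kap n s (A ×ˢ B) := by
  unfold kap
  rw [withDensity_apply _ (hA.prod hB), ← Measure.prod_restrict,
    lintegral_prod _ (measurable_kerS n s).aemeasurable]
  rfl

lemma kap_null_left (n : ℕ) (s : ℝ) (N : Set (EuclideanSpace ℝ (Fin n)))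
    (hN : volume N = 0) : kap n s (N ×ˢ univ) = 0 := by
  apply withDensity_absolutelyContinuous
  rw [Measure.prod_prod, hN, zero_mul]

lemma kap_null_right (n : ℕ) (s : ℝ) (N : Set (EuclideanSpace ℝ (Fin n)))
    (hN : volume N = 0) : kap n s (univ ×ˢ N) = 0 := by
  apply withDensity_absolutelyContinuous
  rw [Measure.prod_prod, hN, mul_zero]

lemma kap_swap (n : ℕ) (s : ℝ) (A B : Set (EuclideanSpace ℝ (Fin n)))
    (hA : MeasurableSet A) (hB : MeasurableSet B) :
    kap n s (A ×ˢ B) = kap n s (B ×ˢ A) := by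
  rw [← Ls_eq n s A B hA hB]
  unfold kap
  rw [withDensity_apply _ (hB.prod hA), ← Measure.prod_restrict,
    lintegral_prod_symm _ (measurable_kerS n s).aemeasurable]
  unfold Ls
  refine lintegral_congr fun x => lintegral_congr fun y => ?_
  exact kerS_comm n s x y

lemma Ps_eq (n : ℕ) (s : ℝ) (E Ω : Set (EuclideanSpace ℝ (Fin n)))
    (hE : MeasurableSet E) (hΩ : MeasurableSet Ω) :
    Ps n s E Ω = kap n s ((E ×ˢ Eᶜ) \ (Ωᶜ ×ˢ Ωᶜ)) := by
  unfold Ps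
  rw [Ls_eq _ _ _ _ (hE.inter hΩ) (hE.compl.inter hΩ),
    Ls_eq _ _ _ _ (hE.inter hΩ) (hE.compl.diff hΩ),
    Ls_eq _ _ _ _ (hE.diff hΩ) (hE.compl.inter hΩ)]
  rw [← measure_union, ← measure_union]
  · congr 1
    ext ⟨x, y⟩
    simp only [mem_union, mem_prod, mem_inter_iff, Set.mem_sdiff, mem_compl_iff]
    tauto
  · rw [Set.disjoint_left]
    rintro ⟨x, y⟩
    simp only [mem_union, mem_prod, mem_inter_iff, Set.mem_sdiff, mem_compl_iff]
    tauto
  · exact (hE.diff hΩ).prod (hE.compl.inter hΩ)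
  · rw [Set.disjoint_left]
    rintro ⟨x, y⟩
    simp only [mem_prod, mem_inter_iff, Set.mem_sdiff, mem_compl_iff]
    tauto
  · exact (hE.inter hΩ).prod (hE.compl.diff hΩ)

/-- splitting of the perimeter over nested domains -/
lemma Ps_split (n : ℕ) (s : ℝ) (E Ω Ω' : Set (EuclideanSpace ℝ (Fin n)))
    (hE : MeasurableSet E) (hΩ : MeasurableSet Ω) (hΩ' : MeasurableSet Ω') (h : Ω' ⊆ Ω) :
    Ps n s E Ω = Ps n s E Ω' + kap n s (((E \ Ω') ×ˢ (Eᶜ \ Ω')) \ (Ωᶜ ×ˢ Ωᶜ)) := by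
  rw [Ps_eq _ _ _ _ hE hΩ, Ps_eq _ _ _ _ hE hΩ', ← measure_union]
  · congr 1
    ext ⟨x, y⟩
    have hx := @h x
    have hy := @h y
    simp only [mem_union, mem_prod, Set.mem_sdiff, mem_compl_iff]
    tauto
  · rw [Set.disjoint_left]
    rintro ⟨x, y⟩
    simp only [mem_prod, Set.mem_sdiff, mem_compl_iff]
    tauto
  · exact ((hE.diff hΩ').prod (hE.compl.diff hΩ')).diff (hΩ.compl.prod hΩ.compl)

lemma kap_rest_congr (n : ℕ) (s : ℝ) (E F Ω Ω' : Set (EuclideanSpace ℝ (Fin n)))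
    (h : volume ((F \ Ω') ∆ (E \ Ω')) = 0) :
    kap n s (((E \ Ω') ×ˢ (Eᶜ \ Ω')) \ (Ωᶜ ×ˢ Ωᶜ)) ≤
      kap n s (((F \ Ω') ×ˢ (Fᶜ \ Ω')) \ (Ωᶜ ×ˢ Ωᶜ)) := by
  set N := (F \ Ω') ∆ (E \ Ω') with hN
  calc _ ≤ kap n s ((((F \ Ω') ×ˢ (Fᶜ \ Ω')) \ (Ωᶜ ×ˢ Ωᶜ)) ∪ (N ×ˢ univ) ∪ (univ ×ˢ N)) := by
        apply measure_mono
        rintro ⟨x, y⟩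
        simp only [hN, mem_symmDiff, mem_union, mem_prod, Set.mem_sdiff, mem_compl_iff, mem_univ]
        tauto
    _ ≤ _ := by
        refine (measure_union_le _ _).trans ?_
        rw [kap_null_right _ _ _ h, add_zero]
        refine (measure_union_le _ _).trans ?_
        rw [kap_null_left _ _ _ h, add_zero]

lemma SMinimal.mono {n : ℕ} {s : ℝ} {E Ω Ω' : Set (EuclideanSpace ℝ (Fin n))}
    (hE : MeasurableSet E) (hΩ : MeasurableSet Ω) (hΩ' : MeasurableSet Ω') (h : Ω' ⊆ Ω)
    (H : SMinimal n s E Ω) : SMinimal n s E Ω' := by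
  have h1 := Ps_split n s E Ω Ω' hE hΩ hΩ' h
  have hfin := H.1
  rw [h1, ENNReal.add_lt_top] at hfin
  refine ⟨hfin.1, fun F hF hFE => ?_⟩
  have h2 := H.2 F hF (measure_mono_null ?_ hFE)
  · rw [h1, Ps_split n s F Ω Ω' hF hΩ hΩ' h] at h2
    have h3 := kap_rest_congr n s F E Ω Ω' (by rw [symmDiff_comm]; exact hFE)
    have h4 := h2.trans (add_le_add_right h3 _)
    exact (ENNReal.add_le_add_iff_right hfin.2.ne).1 h4
  · intro x
    have hx := @h x
    simp only [mem_symmDiff, Set.mem_sdiff]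
    tauto

/-- Local minimality gives minimality against compact perturbations. -/
lemma LocSMinimal.compact_pert {n : ℕ} {s : ℝ} {E Ω : Set (EuclideanSpace ℝ (Fin n))}
    (hE : MeasurableSet E) (hΩ : IsOpen Ω) (H : LocSMinimal n s E Ω)
    (F : Set (EuclideanSpace ℝ (Fin n))) (hF : MeasurableSet F)
    (hc : IsCompact (closure (E ∆ F))) (hs : closure (E ∆ F) ⊆ Ω) :
    Ps n s E Ω ≤ Ps n s F Ω := by
  obtain ⟨V, hVo, hKV, hVΩ, hVc⟩ := exists_open_between_and_isCompact_closure hc hΩ hs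
  have hV := H V hVo hVc hVΩ
  have hsub : V ⊆ Ω := subset_closure.trans hVΩ
  have h0 : volume ((F \ V) ∆ (E \ V)) = 0 := by
    have : (F \ V) ∆ (E \ V) = ∅ := by
      rw [eq_empty_iff_forall_notMem]
      intro x
      have hx : x ∈ E ∆ F → x ∈ V := fun h => hKV (subset_closure h)
      simp only [mem_symmDiff, Set.mem_sdiff] at hx ⊢
      tauto
    rw [this, measure_empty]
  rw [Ps_split n s E Ω V hE hΩ.measurableSet hVo.measurableSet hsub,
    Ps_split n s F Ω V hF hΩ.measurableSet hVo.measurableSet hsub]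
  exact add_le_add (hV.2 F hF h0) (kap_rest_congr n s E F Ω V h0)

lemma integrable_base (n : ℕ) (hn : 1 ≤ n) (s : ℝ) (hs : s ∈ Set.Ioo (0 : ℝ) 1) :
    Integrable (fun z : EuclideanSpace ℝ (Fin n) => min 1 ‖z‖ * ‖z‖ ^ (-((n : ℝ) + s))) := by
  have : Nonempty (Fin n) := ⟨⟨0, hn⟩⟩
  rw [integrable_fun_norm_addHaar volume (f := fun r : ℝ => min 1 r * r ^ (-((n : ℝ) + s)))]
  rw [finrank_euclideanSpace_fin]
  have hsplit : Ioi (0 : ℝ) = Ioo 0 1 ∪ Ici 1 := by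
    ext x; simp only [mem_Ioi, mem_union, mem_Ioo, mem_Ici]
    constructor
    · intro h; rcases lt_or_ge x 1 with h1 | h1
      · exact Or.inl ⟨h, h1⟩
      · exact Or.inr h1
    · rintro (h | h)
      · exact h.1
      · linarith
  have hpow : ∀ y : ℝ, 0 < y → y ^ (n - 1) = y ^ ((n : ℝ) - 1) := by
    intro y hy
    rw [← Real.rpow_natCast, Nat.cast_sub hn, Nat.cast_one]
  rw [hsplit]
  apply IntegrableOn.union
  · have h1 : IntegrableOn (fun y : ℝ => y ^ (-s)) (Ioo 0 1) := by
      rw [intervalIntegral.integrableOn_Ioo_rpow_iff zero_lt_one]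
      linarith [hs.2]
    refine h1.congr_fun (fun y hy => ?_) measurableSet_Ioo
    simp only [smul_eq_mul]
    rw [hpow y hy.1, min_eq_right hy.2.le]
    nth_rewrite 3 [← Real.rpow_one y]
    rw [← Real.rpow_add hy.1, ← Real.rpow_add hy.1]
    congr 1; ring
  · have h1 : IntegrableOn (fun y : ℝ => y ^ (-1 - s)) (Ici 1) := by
      rw [integrableOn_Ici_iff_integrableOn_Ioi]
      exact integrableOn_Ioi_rpow_of_lt (by linarith [hs.1]) zero_lt_one
    refine h1.congr_fun (fun y hy => ?_) measurableSet_Ici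
    have hy1 : (1 : ℝ) ≤ y := hy
    have hy0 : 0 < y := by linarith
    simp only [smul_eq_mul]
    rw [hpow y hy0, min_eq_left hy1, one_mul, ← Real.rpow_add hy0]
    congr 1; ring

lemma kernel_bound (n : ℕ) (hn : 1 ≤ n) (s : ℝ) (hs : s ∈ Set.Ioo (0 : ℝ) 1) :
    ∃ C : ℝ≥0∞, C ≠ ⊤ ∧ ∀ ε : ℝ, 0 < ε → ∀ x : EuclideanSpace ℝ (Fin n),
      ∫⁻ y, ENNReal.ofReal (min ε (dist x y)) * kerS n s x y ≤ C * ENNReal.ofReal (ε ^ (1 - s)) := by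
  set g : EuclideanSpace ℝ (Fin n) → ℝ := fun z => min 1 ‖z‖ * ‖z‖ ^ (-((n : ℝ) + s)) with hg
  have hgi := integrable_base n hn s hs
  refine ⟨ENNReal.ofReal (∫ z, g z), ENNReal.ofReal_ne_top, fun ε hε x => ?_⟩
  have hgn : ∀ z, 0 ≤ g z := fun z => by positivity
  have e1 : ∀ y, ENNReal.ofReal (min ε (dist x y)) * kerS n s x y =
      (fun z => ENNReal.ofReal (ε ^ (1 - n - s) * g (ε⁻¹ • z))) (x - y) := by
    intro y
    unfold kerS
    simp only [hg]
    rw [← ENNReal.ofReal_mul (by positivity)]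
    congr 1
    rw [norm_smul, norm_inv, Real.norm_of_nonneg hε.le, ← dist_eq_norm,
      Real.mul_rpow (by positivity) (by positivity), Real.inv_rpow hε.le, ← Real.rpow_neg hε.le]
    have h1 : min 1 (ε⁻¹ * dist x y) = ε⁻¹ * min ε (dist x y) := by
      rw [mul_min_of_nonneg _ _ (by positivity), inv_mul_cancel₀ hε.ne']
    rw [h1]
    have h2 : ε ^ (1 - (n : ℝ) - s) * (ε⁻¹ * ε ^ (-(-((n : ℝ) + s)))) = 1 := by
      rw [← Real.rpow_neg_one ε, ← Real.rpow_add hε, ← Real.rpow_add hε]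
      ring_nf
      simp
    calc _ = (ε ^ (1 - (n : ℝ) - s) * (ε⁻¹ * ε ^ (-(-((n : ℝ) + s))))) *
        (min ε (dist x y) * dist x y ^ (-((n : ℝ) + s))) := by rw [h2, one_mul]
      _ = _ := by ring
  simp_rw [e1]
  rw [lintegral_sub_left_eq_self
    (fun z => ENNReal.ofReal (ε ^ (1 - (n : ℝ) - s) * g (ε⁻¹ • z))) x]
  have hi : Integrable (fun z => ε ^ (1 - (n : ℝ) - s) * g (ε⁻¹ • z)) :=
    (hgi.comp_smul (inv_ne_zero hε.ne')).const_mul _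
  rw [← ofReal_integral_eq_lintegral_ofReal hi
    (Eventually.of_forall fun z => mul_nonneg (by positivity) (hgn _)),
    integral_const_mul, Measure.integral_comp_smul, finrank_euclideanSpace_fin,
    ← ENNReal.ofReal_mul (integral_nonneg hgn)]
  apply le_of_eq
  congr 1
  rw [smul_eq_mul, inv_pow, inv_inv, abs_of_pos (by positivity), ← mul_assoc, ← Real.rpow_natCast,
    ← Real.rpow_add hε, mul_comm]
  congr 2; ring

lemma exterior_pt (n : ℕ) (s : ℝ) (C : ℝ≥0∞)
    (hC : ∀ ε : ℝ, 0 < ε → ∀ x : EuclideanSpace ℝ (Fin n),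
      ∫⁻ y, ENNReal.ofReal (min ε (dist x y)) * kerS n s x y ≤ C * ENNReal.ofReal (ε ^ (1 - s)))
    (B : Set (EuclideanSpace ℝ (Fin n))) (x : EuclideanSpace ℝ (Fin n))
    (d : ℝ) (hd : 0 < d) (hB : ∀ y ∈ B, d ≤ dist x y) :
    ∫⁻ y in B, kerS n s x y ≤ C * ENNReal.ofReal (d ^ (-s)) := by
  have hmeas : Measurable fun y => ENNReal.ofReal (min d (dist x y)) * kerS n s x y := by
    have h2 : Measurable fun y : EuclideanSpace ℝ (Fin n) => dist x y :=
      (continuous_const.dist continuous_id).measurable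
    have h1 : Measurable fun y : EuclideanSpace ℝ (Fin n) => kerS n s x y := by
      unfold kerS
      exact (h2.pow_const _).ennreal_ofReal
    exact ((measurable_const.min h2).ennreal_ofReal).mul h1
  calc ∫⁻ y in B, kerS n s x y
      ≤ ∫⁻ y in B, ENNReal.ofReal d⁻¹ *
          (ENNReal.ofReal (min d (dist x y)) * kerS n s x y) := by
        refine setLIntegral_mono (hmeas.const_mul _) fun y hy => ?_
        rw [min_eq_left (hB y hy), ← mul_assoc, ← ENNReal.ofReal_mul (inv_nonneg.2 hd.le),
          inv_mul_cancel₀ hd.ne', ENNReal.ofReal_one, one_mul]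
    _ ≤ ∫⁻ y, ENNReal.ofReal d⁻¹ *
          (ENNReal.ofReal (min d (dist x y)) * kerS n s x y) := setLIntegral_le_lintegral _ _
    _ ≤ ENNReal.ofReal d⁻¹ * (C * ENNReal.ofReal (d ^ (1 - s))) := by
        rw [lintegral_const_mul _ hmeas]
        exact mul_le_mul_right (hC d hd x) _
    _ = C * ENNReal.ofReal (d ^ (-s)) := by
        rw [mul_left_comm, ← ENNReal.ofReal_mul (inv_nonneg.2 hd.le)]
        congr 2
        rw [← Real.rpow_neg_one, ← Real.rpow_add hd]
        congr 1; ring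

lemma exterior_bound (n : ℕ) (s : ℝ) (C : ℝ≥0∞)
    (hC : ∀ ε : ℝ, 0 < ε → ∀ x : EuclideanSpace ℝ (Fin n),
      ∫⁻ y, ENNReal.ofReal (min ε (dist x y)) * kerS n s x y ≤ C * ENNReal.ofReal (ε ^ (1 - s)))
    (Ω : Set (EuclideanSpace ℝ (Fin n))) (hΩo : IsOpen Ω) (hne : (Ωᶜ).Nonempty) :
    kap n s (Ω ×ˢ Ωᶜ) ≤ C * ∫⁻ x in Ω, ENNReal.ofReal (infDist x Ωᶜ ^ (-s)) := by
  rw [← Ls_eq _ _ _ _ hΩo.measurableSet hΩo.measurableSet.compl]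
  have hm : Measurable (fun x : EuclideanSpace ℝ (Fin n) =>
      ENNReal.ofReal (infDist x Ωᶜ ^ (-s))) :=
    ((continuous_infDist_pt _).measurable.pow_const _).ennreal_ofReal
  rw [← lintegral_const_mul _ hm]
  refine setLIntegral_mono (hm.const_mul _) fun x hx => ?_
  have hd : 0 < infDist x Ωᶜ :=
    (hΩo.isClosed_compl.notMem_iff_infDist_pos hne).1 (by simpa using hx)
  exact exterior_pt n s C hC Ωᶜ x _ hd fun y hy => infDist_le_dist_of_mem hy

lemma layer_bound (n : ℕ) (s : ℝ) (hs : 0 < s) (C : ℝ≥0∞)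
    (hC : ∀ ε : ℝ, 0 < ε → ∀ x : EuclideanSpace ℝ (Fin n),
      ∫⁻ y, ENNReal.ofReal (min ε (dist x y)) * kerS n s x y ≤ C * ENNReal.ofReal (ε ^ (1 - s)))
    (Ω : Set (EuclideanSpace ℝ (Fin n))) (hΩo : IsOpen Ω) (hne : (Ωᶜ).Nonempty)
    (ε : ℝ) (hε : 0 < ε) :
    ∃ t ∈ Ioo 0 ε, kap n s ((Ω \ {x | t < infDist x Ωᶜ}) ×ˢ {x | t < infDist x Ωᶜ}) ≤
      C * ∫⁻ x in Ω ∩ {x | infDist x Ωᶜ < ε}, ENNReal.ofReal (infDist x Ωᶜ ^ (-s)) := by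
  set d : EuclideanSpace ℝ (Fin n) → ℝ := fun x => infDist x Ωᶜ with hd
  have hdm : Measurable d := (continuous_infDist_pt _).measurable
  set S := Ω ∩ {x | d x < ε} with hS
  have hSm : MeasurableSet S := hΩo.measurableSet.inter (measurableSet_lt hdm measurable_const)
  have : SFinite (kap n s) := by unfold kap; infer_instance
  set Q : Set (ℝ × (EuclideanSpace ℝ (Fin n) × EuclideanSpace ℝ (Fin n))) :=
    {q | q.2.1 ∈ Ω ∧ d q.2.1 ≤ q.1 ∧ q.1 < d q.2.2} with hQ
  have hQm : MeasurableSet Q := by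
    apply MeasurableSet.inter
    · exact measurable_snd.fst hΩo.measurableSet
    apply MeasurableSet.inter
    · exact measurableSet_le (hdm.comp measurable_snd.fst) measurable_fst
    · exact measurableSet_lt measurable_fst (hdm.comp measurable_snd.snd)
  have hsec : ∀ t, (Ω \ {x | t < d x}) ×ˢ {x | t < d x} = Prod.mk t ⁻¹' Q := by
    intro t; ext ⟨y, x⟩
    simp only [hQ, mem_prod, Set.mem_sdiff, Set.mem_ofPred_eq, mem_preimage, not_lt]
    tauto
  have hvol : volume (Ioo 0 ε) = ENNReal.ofReal ε := by simp
  have hε0 : ENNReal.ofReal ε ≠ 0 := by simpa using hε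
  have key : ∫⁻ t in Ioo 0 ε, kap n s (Prod.mk t ⁻¹' Q) ≤
      ENNReal.ofReal ε * (C * ∫⁻ x in S, ENNReal.ofReal (d x ^ (-s))) := by
    rw [← Measure.prod_apply hQm, Measure.prod_apply_symm hQm]
    have hkm : Measurable fun p : EuclideanSpace ℝ (Fin n) × EuclideanSpace ℝ (Fin n) =>
        ENNReal.ofReal (min ε (dist p.1 p.2)) :=
      (measurable_const.min (measurable_fst.dist measurable_snd)).ennreal_ofReal
    have hSm' : MeasurableSet (S ×ˢ (univ : Set (EuclideanSpace ℝ (Fin n)))) :=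
      hSm.prod MeasurableSet.univ
    calc ∫⁻ p, (volume.restrict (Ioo 0 ε)) ((fun t => (t, p)) ⁻¹' Q) ∂(kap n s)
        ≤ ∫⁻ p, (S ×ˢ univ).indicator
            (fun p => ENNReal.ofReal (min ε (dist p.1 p.2))) p ∂(kap n s) := by
          refine lintegral_mono fun p => ?_
          obtain ⟨y, x⟩ := p
          rw [Measure.restrict_apply (measurable_prodMk_right hQm)]
          by_cases hy : y ∈ S
          · rw [indicator_of_mem (by simpa using hy)]
            have h1 : (fun t => (t, (y, x))) ⁻¹' Q ∩ Ioo 0 ε ⊆ Ioo 0 ε ∩ Icc (d y) (d x) := by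
              rintro t ⟨⟨_, h2, h3⟩, h4⟩
              exact ⟨h4, h2, h3.le⟩
            have hxy : d x - d y ≤ dist y x := by
              have := infDist_le_infDist_add_dist (s := Ωᶜ) (x := x) (y := y)
              rw [dist_comm] at this
              simp only [hd]; linarith
            refine (measure_mono h1).trans ?_
            simp only [ENNReal.ofReal_min]
            refine le_min ?_ ?_
            · exact (measure_mono inter_subset_left).trans hvol.le
            · refine (measure_mono inter_subset_right).trans ?_
              rw [Real.volume_Icc]
              exact ENNReal.ofReal_le_ofReal hxy
          · rw [indicator_of_notMem (by simpa using hy)]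
            have : (fun t => (t, (y, x))) ⁻¹' Q ∩ Ioo 0 ε = ∅ := by
              rw [eq_empty_iff_forall_notMem]
              rintro t ⟨⟨h1, h2, h3⟩, h4⟩
              exact hy ⟨h1, lt_of_le_of_lt h2 h4.2⟩
            rw [this, measure_empty]
      _ = ∫⁻ p in S ×ˢ univ, kerS n s p.1 p.2 * ENNReal.ofReal (min ε (dist p.1 p.2))
            ∂(volume.prod volume) := by
          unfold kap
          rw [lintegral_indicator hSm', restrict_withDensity hSm',
            lintegral_withDensity_eq_lintegral_mul _ (measurable_kerS n s) hkm]
          rfl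
      _ = ∫⁻ y in S, ∫⁻ x, kerS n s y x * ENNReal.ofReal (min ε (dist y x)) := by
          rw [← Measure.prod_restrict, lintegral_prod, Measure.restrict_univ]
          exact ((measurable_kerS n s).mul hkm).aemeasurable
      _ ≤ ∫⁻ y in S, ENNReal.ofReal ε * C * ENNReal.ofReal (d y ^ (-s)) := by
          refine setLIntegral_mono ?_ fun y hy => ?_
          · exact ((hdm.pow_const _).ennreal_ofReal).const_mul _
          have hdy : 0 < d y :=
            (hΩo.isClosed_compl.notMem_iff_infDist_pos hne).1 (by simpa using hy.1)
          have h1 := hC ε hε y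
          simp_rw [mul_comm (kerS n s y _)]
          refine h1.trans ?_
          have h2 : ε ^ (1 - s) ≤ ε * d y ^ (-s) := by
            rw [sub_eq_add_neg, Real.rpow_add hε, Real.rpow_one]
            gcongr ε * ?_
            exact Real.rpow_le_rpow_of_nonpos hdy (le_of_lt hy.2) (by linarith)
          rw [mul_comm (ENNReal.ofReal ε) C, mul_assoc, ← ENNReal.ofReal_mul hε.le]
          gcongr
      _ = _ := by
          rw [lintegral_const_mul _ ((hdm.pow_const _).ennreal_ofReal), mul_assoc]
  obtain ⟨t, ht, hle⟩ := exists_le_setLAverage (μ := volume) (s := Ioo 0 ε)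
    (f := fun t => kap n s (Prod.mk t ⁻¹' Q)) (by rw [hvol]; exact hε0)
    (by rw [hvol]; exact ENNReal.ofReal_ne_top)
    (measurable_measure_prodMk_left hQm).aemeasurable
  refine ⟨t, ht, ?_⟩
  rw [hsec]
  refine hle.trans ?_
  rw [setLAverage_eq, hvol]
  refine ENNReal.div_le_of_le_mul ?_
  rw [mul_comm]
  exact key

lemma shift_bound {n : ℕ} (g : ℝ → ℝ≥0∞) (hg : Measurable g) (hgi : ∫⁻ t, g t ≠ ⊤)
    (h : EuclideanSpace ℝ (Fin n) → ℝ) (hh : Measurable h) (e : EuclideanSpace ℝ (Fin n))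
    (he : ∀ y (t : ℝ), h (y + t • e) = h y + t) (x : EuclideanSpace ℝ (Fin n)) (r : ℝ) :
    ∫⁻ y in ball x r, g (h y) < ⊤ := by
  set B' := ball x (r + ‖e‖) with hB'
  have h1 : ∀ t ∈ Icc (0 : ℝ) 1, ∫⁻ y in ball x r, g (h y) ≤ ∫⁻ y in B', g (h y + t) := by
    intro t ht
    rw [← lintegral_indicator measurableSet_ball, ← lintegral_indicator measurableSet_ball,
      ← lintegral_add_right_eq_self _ (t • e)]
    refine lintegral_mono fun y => ?_
    by_cases hy : y + t • e ∈ ball x r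
    · have hyB : y ∈ B' := by
        rw [hB', mem_ball]
        rw [mem_ball] at hy
        have h2 : dist y (y + t • e) ≤ ‖e‖ := by
          rw [dist_self_add_right, norm_smul, Real.norm_of_nonneg ht.1]
          exact mul_le_of_le_one_left (norm_nonneg _) ht.2
        linarith [dist_triangle y (y + t • e) x]
      rw [indicator_of_mem hy, indicator_of_mem hyB, he]
    · rw [indicator_of_notMem hy]; exact bot_le
  have hm : Measurable (fun p : ℝ × EuclideanSpace ℝ (Fin n) => g (h p.2 + p.1)) :=
    hg.comp ((hh.comp measurable_snd).add measurable_fst)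
  calc ∫⁻ y in ball x r, g (h y)
      = ∫⁻ t in Icc (0 : ℝ) 1, ∫⁻ y in ball x r, g (h y) := by
        rw [lintegral_const]; simp
    _ ≤ ∫⁻ t in Icc (0 : ℝ) 1, ∫⁻ y in B', g (h y + t) :=
        setLIntegral_mono' measurableSet_Icc h1
    _ = ∫⁻ y in B', ∫⁻ t in Icc (0 : ℝ) 1, g (h y + t) :=
        lintegral_lintegral_swap hm.aemeasurable
    _ ≤ ∫⁻ y in B', ∫⁻ t, g t := by
        refine lintegral_mono fun y => ?_
        refine (setLIntegral_le_lintegral _ _).trans ?_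
        rw [lintegral_add_left_eq_self]
    _ < ⊤ := by
        rw [lintegral_const]
        refine ENNReal.mul_lt_top (lt_top_iff_ne_top.2 hgi) ?_
        simpa using measure_ball_lt_top

lemma local_weight {n : ℕ} {s : ℝ} (hs : s ∈ Set.Ioo (0 : ℝ) 1)
    {Ω : Set (EuclideanSpace ℝ (Fin n))} (hne : (Ωᶜ).Nonempty)
    (h : EuclideanSpace ℝ (Fin n) → ℝ) (K : ℝ) (hK : 0 ≤ K)
    (hlip : ∀ y z, h y - h z ≤ (1 + K) * dist y z)
    (hh : Measurable h) (e : EuclideanSpace ℝ (Fin n))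
    (he : ∀ y (t : ℝ), h (y + t • e) = h y + t) (x : EuclideanSpace ℝ (Fin n)) (r : ℝ) (hr : 0 < r)
    (hU : ∀ y ∈ ball x (2 * r), y ∈ Ω ↔ 0 < h y) :
    ∫⁻ y in ball x r ∩ Ω, ENNReal.ofReal (infDist y Ωᶜ ^ (-s)) < ⊤ := by
  set g : ℝ → ℝ≥0∞ := (Ioo (0 : ℝ) 1).indicator fun t => ENNReal.ofReal (t ^ (-s)) with hg
  have hgm : Measurable g :=
    ((measurable_id.pow_const _).ennreal_ofReal).indicator measurableSet_Ioo
  have hgi : ∫⁻ t, g t ≠ ⊤ := by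
    rw [hg, lintegral_indicator measurableSet_Ioo]
    have h1 : IntegrableOn (fun y : ℝ => y ^ (-s)) (Ioo 0 1) := by
      rw [intervalIntegral.integrableOn_Ioo_rpow_iff zero_lt_one]
      linarith [hs.2]
    exact h1.setLIntegral_lt_top.ne
  have hsb := shift_bound g hgm hgi h hh e he x r
  have hgh : Measurable fun y => g (h y) := hgm.comp hh
  have hpt : ∀ y ∈ ball x r ∩ Ω, ENNReal.ofReal (infDist y Ωᶜ ^ (-s)) ≤
      ENNReal.ofReal (r ^ (-s)) + ENNReal.ofReal ((1 + K) ^ s) * (1 + g (h y)) := by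
    rintro y ⟨hy, hyΩ⟩
    have hy' := mem_ball.1 hy
    have hy0 : 0 < h y := (hU y (by rw [mem_ball]; linarith)).1 hyΩ
    have hd : min r (h y / (1 + K)) ≤ infDist y Ωᶜ := by
      rw [le_infDist hne]
      intro z hz
      by_cases hzB : z ∈ ball x (2 * r)
      · refine (min_le_right _ _).trans ?_
        have hz0 : ¬ 0 < h z := fun h0 => hz ((hU z hzB).2 h0)
        rw [div_le_iff₀ (by linarith)]
        have := hlip y z
        push Not at hz0
        linarith
      · refine (min_le_left _ _).trans ?_
        rw [mem_ball, not_lt] at hzB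
        have := dist_triangle z y x
        rw [dist_comm z y] at this
        linarith
    have hq : 0 < h y / (1 + K) := div_pos hy0 (by linarith)
    rcases le_total r (h y / (1 + K)) with hc | hc
    · rw [min_eq_left hc] at hd
      refine le_trans (ENNReal.ofReal_le_ofReal ?_) le_self_add
      exact Real.rpow_le_rpow_of_nonpos hr hd (by linarith [hs.1])
    · rw [min_eq_right hc] at hd
      refine le_trans (ENNReal.ofReal_le_ofReal
        (Real.rpow_le_rpow_of_nonpos hq hd (by linarith [hs.1]))) ?_
      refine le_trans ?_ le_add_self
      rw [Real.div_rpow hy0.le (by linarith), Real.rpow_neg (x := 1 + K) (by linarith), div_inv_eq_mul, mul_comm,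
        ENNReal.ofReal_mul (by positivity)]
      gcongr
      by_cases h1 : h y < 1
      · have : g (h y) = ENNReal.ofReal (h y ^ (-s)) := by
          rw [hg, indicator_of_mem (mem_Ioo.2 ⟨hy0, h1⟩)]
        rw [this]; exact le_add_self
      · refine le_trans ?_ le_self_add
        rw [← ENNReal.ofReal_one]
        apply ENNReal.ofReal_le_ofReal
        exact Real.rpow_le_one_of_one_le_of_nonpos (not_lt.1 h1) (by linarith [hs.1])
  have hm1 : Measurable fun y => ENNReal.ofReal (r ^ (-s)) +
      ENNReal.ofReal ((1 + K) ^ s) * (1 + g (h y)) :=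
    measurable_const.add ((measurable_const.add hgh).const_mul _)
  refine lt_of_le_of_lt (setLIntegral_mono hm1 hpt) ?_
  refine lt_of_le_of_lt (lintegral_mono_set inter_subset_left) ?_
  have hm2 : Measurable fun y => 1 + g (h y) := measurable_const.add hgh
  rw [lintegral_add_left measurable_const, lintegral_const_mul _ hm2,
    lintegral_add_left measurable_const]
  have hv : volume (ball x r) < ⊤ := measure_ball_lt_top
  simp only [lintegral_const, Measure.restrict_apply MeasurableSet.univ, univ_inter, one_mul]
  refine ENNReal.add_lt_top.2 ⟨ENNReal.mul_lt_top ENNReal.ofReal_lt_top hv, ?_⟩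
  exact ENNReal.mul_lt_top ENNReal.ofReal_lt_top (ENNReal.add_lt_top.2 ⟨hv, hsb⟩)

lemma weight_finite {n : ℕ} {s : ℝ} (hs : s ∈ Set.Ioo (0 : ℝ) 1)
    {Ω : Set (EuclideanSpace ℝ (Fin n))} (hne : (Ωᶜ).Nonempty) (hΩo : IsOpen Ω)
    (hΩb : IsBounded Ω) (hΩlip : HasLipschitzBoundary Ω) :
    ∫⁻ y in Ω, ENNReal.ofReal (infDist y Ωᶜ ^ (-s)) < ⊤ := by
  have hcomp : IsCompact (closure Ω) := hΩb.isCompact_closure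
  suffices H : ∫⁻ y in closure Ω ∩ Ω, ENNReal.ofReal (infDist y Ωᶜ ^ (-s)) < ⊤ by
    rwa [inter_eq_right.2 subset_closure] at H
  refine hcomp.induction_on
    (p := fun V => ∫⁻ y in V ∩ Ω, ENNReal.ofReal (infDist y Ωᶜ ^ (-s)) < ⊤) ?_ ?_ ?_ ?_
  · simp
  · intro V W hVW hW
    exact lt_of_le_of_lt (lintegral_mono_set (inter_subset_inter_left _ hVW)) hW
  · intro V W hV hW
    rw [union_inter_distrib_right]
    exact lt_of_le_of_lt (lintegral_union_le _ _ _) (ENNReal.add_lt_top.2 ⟨hV, hW⟩)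
  · intro x hx
    by_cases hxΩ : x ∈ Ω
    · have hd : 0 < infDist x Ωᶜ :=
        (hΩo.isClosed_compl.notMem_iff_infDist_pos hne).1 (by simpa using hxΩ)
      refine ⟨ball x 1 ∩ {y | infDist x Ωᶜ / 2 < infDist y Ωᶜ}, mem_nhdsWithin_of_mem_nhds
        (inter_mem (ball_mem_nhds _ one_pos) ((isOpen_lt continuous_const
          (continuous_infDist_pt _)).mem_nhds (by simpa using hd))), ?_⟩
      refine lt_of_le_of_lt (setLIntegral_mono
        (g := fun _ => ENNReal.ofReal ((infDist x Ωᶜ / 2) ^ (-s))) measurable_const ?_) ?_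
      · rintro y ⟨⟨_, hy⟩, _⟩
        exact ENNReal.ofReal_le_ofReal
          (Real.rpow_le_rpow_of_nonpos (half_pos hd) (le_of_lt hy) (by linarith [hs.1]))
      · rw [lintegral_const, Measure.restrict_apply MeasurableSet.univ, univ_inter]
        refine ENNReal.mul_lt_top ENNReal.ofReal_lt_top ?_
        exact lt_of_le_of_lt (measure_mono (fun y hy => hy.1.1))
          (measure_ball_lt_top (x := x) (r := 1))
    · have hfr : x ∈ frontier Ω := by
        rw [hΩo.frontier_eq]; exact ⟨hx, hxΩ⟩
      obtain ⟨U, hUo, hxU, L, φ, K, hφ, hΩU, -⟩ := hΩlip x hfr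
      obtain ⟨R, hR, hRU⟩ := Metric.isOpen_iff.1 hUo x hxU
      have hfst : ∀ y z, dist (L y).fst (L z).fst ≤ dist y z := by
        intro y z
        rw [dist_eq_norm, ← WithLp.sub_fst, ← map_sub, dist_eq_norm]
        exact (WithLp.norm_fst_le _ _).trans (L.norm_map _).le
      have hsnd : ∀ y z, (L y).snd - (L z).snd ≤ dist y z := by
        intro y z
        refine (le_abs_self _).trans ?_
        rw [← Real.norm_eq_abs, ← WithLp.sub_snd, ← map_sub, dist_eq_norm]
        exact (WithLp.norm_snd_le _ _).trans (L.norm_map _).le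
      have hlip : ∀ y z, ((L y).snd - φ (L y).fst) - ((L z).snd - φ (L z).fst) ≤
          (1 + (K : ℝ)) * dist y z := by
        intro y z
        have h1 := hφ.dist_le_mul (L z).fst (L y).fst
        have h2 := (abs_le.1 (Real.dist_eq _ _ ▸ h1)).2
        have h3 := mul_le_mul_of_nonneg_left (hfst z y) K.2
        have h4 := hsnd y z
        rw [dist_comm z y] at h3
        have h5 : (K : ℝ) * dist (L z).fst (L y).fst ≤ K * dist y z := h3
        linarith
      have hcont : Continuous fun y => (L y).snd - φ (L y).fst := by
        have : LipschitzWith (1 + K) fun y => (L y).snd - φ (L y).fst := by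
          refine LipschitzWith.of_le_add_mul _ fun y z => ?_
          have := hlip y z
          push_cast
          linarith
        exact this.continuous
      refine ⟨ball x (R / 2), mem_nhdsWithin_of_mem_nhds (ball_mem_nhds _ (half_pos hR)), ?_⟩
      refine local_weight hs hne (fun y => (L y).snd - φ (L y).fst) K K.2 hlip hcont.measurable
        (L.symm (WithLp.toLp 2 (0, 1))) ?_ x (R / 2) (half_pos hR) ?_
      · intro y t
        simp only [map_add, map_smul, LinearIsometryEquiv.apply_symm_apply]
        simp
        ring
      · intro y hy
        have hyU : y ∈ U := hRU (by rw [mem_ball] at hy ⊢; linarith)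
        have : y ∈ Ω ∩ U ↔ _ := Set.ext_iff.1 hΩU y
        constructor
        · intro hyΩ
          exact sub_pos.2 (this.1 ⟨hyΩ, hyU⟩).2
        · intro hpos
          exact (this.2 ⟨hyU, sub_pos.1 hpos⟩).1

/-- Good sequence of inner approximating levels. -/
lemma good_levels {n : ℕ} {s : ℝ} (hs : s ∈ Set.Ioo (0 : ℝ) 1) (C : ℝ≥0∞) (hCt : C ≠ ⊤)
    (hC : ∀ ε : ℝ, 0 < ε → ∀ x : EuclideanSpace ℝ (Fin n),
      ∫⁻ y, ENNReal.ofReal (min ε (dist x y)) * kerS n s x y ≤ C * ENNReal.ofReal (ε ^ (1 - s)))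
    {Ω : Set (EuclideanSpace ℝ (Fin n))} (hne : (Ωᶜ).Nonempty) (hΩo : IsOpen Ω)
    (hw : ∫⁻ y in Ω, ENNReal.ofReal (infDist y Ωᶜ ^ (-s)) < ⊤) :
    ∃ t : ℕ → ℝ, (∀ k, 0 < t k ∧ t k < 1 / ((k : ℝ) + 1)) ∧
      Tendsto (fun k => kap n s ((Ω \ {x | t k < infDist x Ωᶜ}) ×ˢ {x | t k < infDist x Ωᶜ}))
        atTop (𝓝 0) := by
  have hpos : ∀ k : ℕ, (0 : ℝ) < 1 / ((k : ℝ) + 1) := fun k => Nat.one_div_pos_of_nat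
  choose t ht hle using fun k : ℕ => layer_bound n s hs.1 C hC Ω hΩo hne _ (hpos k)
  refine ⟨t, ht, ?_⟩
  set ν : Measure (EuclideanSpace ℝ (Fin n)) :=
    volume.withDensity (fun y => ENNReal.ofReal (infDist y Ωᶜ ^ (-s))) with hν
  set S : ℕ → Set (EuclideanSpace ℝ (Fin n)) :=
    fun k => Ω ∩ {x | infDist x Ωᶜ < 1 / ((k : ℝ) + 1)} with hS
  have hSm : ∀ k, MeasurableSet (S k) := fun k =>
    hΩo.measurableSet.inter (isOpen_lt (continuous_infDist_pt _) continuous_const).measurableSet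
  have hνS : ∀ k, ν (S k) = ∫⁻ x in S k, ENNReal.ofReal (infDist x Ωᶜ ^ (-s)) := fun k =>
    withDensity_apply _ (hSm k)
  have hanti : Antitone S := by
    intro i j hij x hx
    have h2 : infDist x Ωᶜ < 1 / ((j : ℝ) + 1) := hx.2
    have h3 : infDist x Ωᶜ < 1 / ((i : ℝ) + 1) := h2.trans_le (Nat.one_div_le_one_div hij)
    exact ⟨hx.1, h3⟩
  have hinter : ⋂ k, S k = ∅ := by
    rw [eq_empty_iff_forall_notMem]
    intro x hx
    rw [mem_iInter] at hx
    have hd : 0 < infDist x Ωᶜ :=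
      (hΩo.isClosed_compl.notMem_iff_infDist_pos hne).1 (by simpa using (hx 0).1)
    obtain ⟨k, hk⟩ := exists_nat_one_div_lt hd
    exact absurd (hx k).2 (not_lt.2 hk.le)
  have hfin : ν (S 0) ≠ ⊤ := by
    rw [hνS]
    exact (lt_of_le_of_lt (lintegral_mono_set inter_subset_left) hw).ne
  have hlim := tendsto_measure_iInter_atTop (μ := ν) (fun k => (hSm k).nullMeasurableSet)
    hanti ⟨0, hfin⟩
  rw [hinter, measure_empty] at hlim
  have hlim2 : Tendsto (fun k => C * ν (S k)) atTop (𝓝 0) := by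
    have := ENNReal.Tendsto.const_mul (a := C) hlim (Or.inr hCt)
    rwa [mul_zero] at this
  refine tendsto_of_tendsto_of_tendsto_of_le_of_le tendsto_const_nhds hlim2
    (fun _ => bot_le) (fun k => ?_)
  simp only [hνS]
  exact hle k

lemma level_compact {n : ℕ} {Ω : Set (EuclideanSpace ℝ (Fin n))} (hΩb : IsBounded Ω)
    (t : ℝ) (ht : 0 < t) :
    closure {x | t < infDist x Ωᶜ} ⊆ Ω ∧ IsCompact (closure {x | t < infDist x Ωᶜ}) := by
  have h1 : closure {x | t < infDist x Ωᶜ} ⊆ {x | t ≤ infDist x Ωᶜ} :=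
    closure_minimal (fun x (hx : t < infDist x Ωᶜ) => (show t ≤ infDist x Ωᶜ from hx.le))
      (isClosed_le continuous_const (continuous_infDist_pt _))
  have h2 : {x | t ≤ infDist x Ωᶜ} ⊆ Ω := by
    intro x hx
    by_contra hxΩ
    have : infDist x Ωᶜ = 0 := infDist_zero_of_mem hxΩ
    have hx' : t ≤ infDist x Ωᶜ := hx
    linarith
  have h3 := h1.trans h2
  exact ⟨h3, (hΩb.subset (subset_closure.trans h3)).isCompact_closure⟩

lemma glue_incl {X : Type*} {E F Ω A D : Set X} (hA : A ⊆ Ω) (hD : ∀ x ∈ Ω, x ∉ A → x ∈ D) :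
    (((F ∩ A) ∪ (E \ A)) ×ˢ ((F ∩ A) ∪ (E \ A))ᶜ) \ (Ωᶜ ×ˢ Ωᶜ) ⊆
      ((F ×ˢ Fᶜ) \ (Ωᶜ ×ˢ Ωᶜ)) ∪ (((E ×ˢ Eᶜ) ∩ ((D ×ˢ univ) ∪ (univ ×ˢ D))) ∪
        (((Ω \ A) ×ˢ A) ∪ (A ×ˢ (Ω \ A)))) ∪
        (((F \ Ω) ∆ (E \ Ω)) ×ˢ univ) ∪ (univ ×ˢ ((F \ Ω) ∆ (E \ Ω))) := by
  rintro ⟨x, y⟩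
  have hx1 := hD x
  have hy1 := hD y
  have hx2 := @hA x
  have hy2 := @hA y
  simp only [mem_symmDiff, mem_union, mem_prod, mem_inter_iff, Set.mem_sdiff,
    mem_compl_iff, mem_univ, and_true, true_and]
  generalize (x ∈ A) = xA at *
  generalize (y ∈ A) = yA at *
  generalize (x ∈ Ω) = xO at *
  generalize (y ∈ Ω) = yO at *
  generalize (x ∈ D) = xD at *
  generalize (y ∈ D) = yD at *
  generalize (x ∈ E) = xE at *
  generalize (y ∈ E) = yE at *
  generalize (x ∈ F) = xF at *
  generalize (y ∈ F) = yF at *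
  clear hA hD
  by_cases a1 : xA <;> by_cases a2 : yA <;> by_cases a3 : xO <;> by_cases a4 : yO <;>
    simp_all <;> tauto

lemma compact_pert_minimal {n : ℕ} {s : ℝ} {E Ω : Set (EuclideanSpace ℝ (Fin n))}
    (hE : MeasurableSet E) (hΩo : IsOpen Ω) (hΩb : IsBounded Ω) (hne : (Ωᶜ).Nonempty)
    (t : ℕ → ℝ) (ht : ∀ k, 0 < t k ∧ t k < 1 / ((k : ℝ) + 1))
    (hlim : Tendsto (fun k => kap n s ((Ω \ {x | t k < infDist x Ωᶜ}) ×ˢ {x | t k < infDist x Ωᶜ}))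
        atTop (𝓝 0))
    (hfin : Ps n s E Ω < ⊤)
    (H : ∀ F : Set (EuclideanSpace ℝ (Fin n)), MeasurableSet F →
        IsCompact (closure (E ∆ F)) → closure (E ∆ F) ⊆ Ω → Ps n s E Ω ≤ Ps n s F Ω) :
    SMinimal n s E Ω := by
  refine ⟨hfin, fun F hF hFE => ?_⟩
  set A : ℕ → Set (EuclideanSpace ℝ (Fin n)) := fun k => {x | t k < infDist x Ωᶜ} with hA
  have hAm : ∀ k, MeasurableSet (A k) := fun k =>
    (isOpen_lt continuous_const (continuous_infDist_pt _)).measurableSet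
  have hAc := fun k => level_compact hΩb (t k) (ht k).1
  have hAΩ : ∀ k, A k ⊆ Ω := fun k => subset_closure.trans (hAc k).1
  -- the boundary strips
  set D : ℕ → Set (EuclideanSpace ℝ (Fin n)) :=
    fun k => Ω ∩ {x | infDist x Ωᶜ ≤ 1 / ((k : ℝ) + 1)} with hD
  have hDm : ∀ k, MeasurableSet (D k) := fun k =>
    hΩo.measurableSet.inter (isClosed_le (continuous_infDist_pt _) continuous_const).measurableSet
  have hAD : ∀ k, ∀ x ∈ Ω, x ∉ A k → x ∈ D k := by
    intro k x hx hxA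
    exact ⟨hx, (not_lt.1 hxA).trans (ht k).2.le⟩
  set T : ℕ → Set (EuclideanSpace ℝ (Fin n) × EuclideanSpace ℝ (Fin n)) :=
    fun k => (E ×ˢ Eᶜ) ∩ ((D k ×ˢ univ) ∪ (univ ×ˢ D k)) with hT
  have hTm : ∀ k, MeasurableSet (T k) := fun k =>
    (hE.prod hE.compl).inter (((hDm k).prod MeasurableSet.univ).union
      (MeasurableSet.univ.prod (hDm k)))
  have hDanti : Antitone D := by
    intro i j hij x hx
    have h2 : infDist x Ωᶜ ≤ 1 / ((j : ℝ) + 1) := hx.2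
    have h3 : infDist x Ωᶜ ≤ 1 / ((i : ℝ) + 1) := h2.trans (Nat.one_div_le_one_div hij)
    exact ⟨hx.1, h3⟩
  have hTanti : Antitone T := by
    intro i j hij
    exact inter_subset_inter_right _ (union_subset_union
      (prod_mono_left (hDanti hij)) (prod_mono_right (hDanti hij)))
  have hDev : ∀ x, ∃ k, ∀ j, k ≤ j → x ∉ D j := by
    intro x
    by_cases hx : x ∈ Ω
    · have hd : 0 < infDist x Ωᶜ :=
        (hΩo.isClosed_compl.notMem_iff_infDist_pos hne).1 (by simpa using hx)
      obtain ⟨k, hk⟩ := exists_nat_one_div_lt hd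
      exact ⟨k, fun j hj hxj => absurd (hDanti hj hxj).2 (not_le.2 hk)⟩
    · exact ⟨0, fun j _ hxj => hx hxj.1⟩
  have hTinter : ⋂ k, T k = ∅ := by
    rw [eq_empty_iff_forall_notMem]
    rintro ⟨x, y⟩ hxy
    rw [mem_iInter] at hxy
    obtain ⟨k, hk⟩ := hDev x
    obtain ⟨l, hl⟩ := hDev y
    rcases (hxy (max k l)).2 with h | h
    · exact hk _ (le_max_left _ _) h.1
    · exact hl _ (le_max_right _ _) h.2
  have hT0 : kap n s (T 0) ≠ ⊤ := by
    rw [Ps_eq _ _ _ _ hE hΩo.measurableSet] at hfin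
    refine (lt_of_le_of_lt (measure_mono ?_) hfin).ne
    rintro ⟨x, y⟩ ⟨h1, h2⟩
    refine ⟨h1, fun h3 => ?_⟩
    rcases h2 with h | h
    · exact h3.1 h.1.1
    · exact h3.2 h.2.1
  have hTlim := tendsto_measure_iInter_atTop (μ := kap n s)
    (fun k => (hTm k).nullMeasurableSet) hTanti ⟨0, hT0⟩
  rw [hTinter, measure_empty] at hTlim
  set N := (F \ Ω) ∆ (E \ Ω) with hN
  have hbound : ∀ k, Ps n s E Ω ≤ Ps n s F Ω + (kap n s (T k) +
      (kap n s ((Ω \ A k) ×ˢ A k) + kap n s ((Ω \ A k) ×ˢ A k))) := by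
    intro k
    set G := (F ∩ A k) ∪ (E \ A k) with hG
    have hGm : MeasurableSet G := (hF.inter (hAm k)).union (hE.diff (hAm k))
    have hsub : E ∆ G ⊆ A k := by
      intro x
      simp only [hG, mem_symmDiff, mem_union, mem_inter_iff, Set.mem_sdiff]
      tauto
    have hsub2 : closure (E ∆ G) ⊆ closure (A k) := closure_mono hsub
    refine (H G hGm ((hAc k).2.of_isClosed_subset isClosed_closure hsub2)
      (hsub2.trans (hAc k).1)).trans ?_
    rw [Ps_eq _ _ _ _ hGm hΩo.measurableSet, Ps_eq _ _ _ _ hF hΩo.measurableSet]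
    calc kap n s ((G ×ˢ Gᶜ) \ (Ωᶜ ×ˢ Ωᶜ))
        ≤ kap n s (((F ×ˢ Fᶜ) \ (Ωᶜ ×ˢ Ωᶜ)) ∪ (T k ∪ (((Ω \ A k) ×ˢ A k) ∪ (A k ×ˢ (Ω \ A k))))
            ∪ (N ×ˢ univ) ∪ (univ ×ˢ N)) := by
          apply measure_mono
          exact glue_incl (hAΩ k) (hAD k)
      _ ≤ _ := by
          refine (measure_union_le _ _).trans ?_
          rw [kap_null_right _ _ _ hFE, add_zero]
          refine (measure_union_le _ _).trans ?_
          rw [kap_null_left _ _ _ hFE, add_zero]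
          refine (measure_union_le _ _).trans (add_le_add le_rfl ?_)
          refine (measure_union_le _ _).trans (add_le_add le_rfl ?_)
          refine (measure_union_le _ _).trans (add_le_add le_rfl ?_)
          rw [kap_swap _ _ _ _ (hAm k) (hΩo.measurableSet.diff (hAm k))]
  have hrhs : Tendsto (fun k => Ps n s F Ω + (kap n s (T k) +
      (kap n s ((Ω \ A k) ×ˢ A k) + kap n s ((Ω \ A k) ×ˢ A k)))) atTop
      (𝓝 (Ps n s F Ω + (0 + (0 + 0)))) :=
    tendsto_const_nhds.add (Tendsto.add hTlim (hlim.add hlim))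
  simp only [add_zero] at hrhs
  exact ge_of_tendsto' hrhs hbound

lemma loc_finite {n : ℕ} {s : ℝ} {E Ω : Set (EuclideanSpace ℝ (Fin n))}
    (hE : MeasurableSet E) (hΩo : IsOpen Ω) (hΩb : IsBounded Ω) (hne : (Ωᶜ).Nonempty)
    (t : ℕ → ℝ) (ht : ∀ k, 0 < t k ∧ t k < 1 / ((k : ℝ) + 1))
    (hlim : Tendsto (fun k => kap n s ((Ω \ {x | t k < infDist x Ωᶜ}) ×ˢ {x | t k < infDist x Ωᶜ}))
        atTop (𝓝 0))
    (hper : kap n s (Ω ×ˢ Ωᶜ) < ⊤)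
    (H : LocSMinimal n s E Ω) : Ps n s E Ω < ⊤ := by
  set A : ℕ → Set (EuclideanSpace ℝ (Fin n)) := fun k => {x | t k < infDist x Ωᶜ} with hA
  have hAo : ∀ k, IsOpen (A k) := fun k =>
    isOpen_lt continuous_const (continuous_infDist_pt _)
  have hAm : ∀ k, MeasurableSet (A k) := fun k => (hAo k).measurableSet
  have hAc := fun k => level_compact hΩb (t k) (ht k).1
  have hAΩ : ∀ k, A k ⊆ Ω := fun k => subset_closure.trans (hAc k).1
  have hΩm := hΩo.measurableSet
  have hbound : ∀ k, Ps n s E (A k) ≤ kap n s (Ω ×ˢ Ωᶜ) + kap n s ((Ω \ A k) ×ˢ A k) := by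
    intro k
    have h1 := (H (A k) (hAo k) (hAc k).2 (hAc k).1).2 (E \ A k) (hE.diff (hAm k)) (by
      have : ((E \ A k) \ A k) ∆ (E \ A k) = ∅ := by
        rw [eq_empty_iff_forall_notMem]
        intro x
        simp only [mem_symmDiff, Set.mem_sdiff]
        tauto
      rw [this, measure_empty])
    refine h1.trans ?_
    rw [Ps_eq _ _ _ _ (hE.diff (hAm k)) (hAm k), kap_swap _ _ _ _ hΩm hΩm.compl]
    refine le_trans (measure_mono ?_) (measure_union_le _ _)
    rintro ⟨x, y⟩
    have hy2 := @hAΩ k y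
    simp only [mem_union, mem_prod, Set.mem_sdiff, mem_compl_iff]
    tauto
  -- a uniform bound along a subsequence
  have hev : ∀ᶠ k in atTop, kap n s ((Ω \ A k) ×ˢ A k) < 1 := hlim.eventually_lt_const one_pos
  obtain ⟨k0, hk0⟩ := eventually_atTop.1 hev
  set W : ℕ → Set (EuclideanSpace ℝ (Fin n)) :=
    fun k => {x | 1 / ((k : ℝ) + 1) < infDist x Ωᶜ} with hW
  set R : ℕ → Set (EuclideanSpace ℝ (Fin n) × EuclideanSpace ℝ (Fin n)) :=
    fun k => (E ×ˢ Eᶜ) \ ((W k)ᶜ ×ˢ (W k)ᶜ) with hR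
  have hWmono : Monotone W := by
    intro i j hij x hx
    have h2 : 1 / ((i : ℝ) + 1) < infDist x Ωᶜ := hx
    have h3 : 1 / ((j : ℝ) + 1) < infDist x Ωᶜ := (Nat.one_div_le_one_div hij).trans_lt h2
    exact h3
  have hRmono : Monotone R := by
    intro i j hij
    exact sdiff_subset_sdiff_right (prod_mono (compl_subset_compl.2 (hWmono hij))
      (compl_subset_compl.2 (hWmono hij)))
  have hWex : ∀ x ∈ Ω, ∃ k, x ∈ W k := by
    intro x hx
    have hd : 0 < infDist x Ωᶜ :=
      (hΩo.isClosed_compl.notMem_iff_infDist_pos hne).1 (by simpa using hx)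
    exact exists_nat_one_div_lt hd
  have hRb : ∀ k, kap n s (R k) ≤ kap n s (Ω ×ˢ Ωᶜ) + 1 := by
    intro k
    set j := max k k0
    have hWA : W j ⊆ A j := fun x hx => lt_trans (ht j).2 hx
    calc kap n s (R k) ≤ kap n s (R j) := measure_mono (hRmono (le_max_left _ _))
      _ ≤ Ps n s E (A j) := by
          rw [Ps_eq _ _ _ _ hE (hAm j)]
          exact measure_mono (sdiff_subset_sdiff_right (prod_mono (compl_subset_compl.2 hWA)
            (compl_subset_compl.2 hWA)))
      _ ≤ _ := (hbound j).trans (add_le_add le_rfl (hk0 j (le_max_right _ _)).le)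
  rw [Ps_eq _ _ _ _ hE hΩm]
  have hsub : (E ×ˢ Eᶜ) \ (Ωᶜ ×ˢ Ωᶜ) ⊆ ⋃ k, R k := by
    rintro ⟨x, y⟩ ⟨h1, h2⟩
    rw [mem_iUnion]
    by_cases hx : x ∈ Ω
    · obtain ⟨k, hk⟩ := hWex x hx
      exact ⟨k, h1, fun h3 => h3.1 hk⟩
    · by_cases hy : y ∈ Ω
      · obtain ⟨k, hk⟩ := hWex y hy
        exact ⟨k, h1, fun h3 => h3.2 hk⟩
      · exact absurd ⟨hx, hy⟩ h2
  refine lt_of_le_of_lt (measure_mono hsub) ?_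
  rw [hRmono.measure_iUnion]
  exact lt_of_le_of_lt (iSup_le hRb) (ENNReal.add_lt_top.2 ⟨hper, ENNReal.one_lt_top⟩)

/-- Theorem 1.7: in a bounded open set with Lipschitz boundary, the notions of
`s`-minimal set, local minimizer with respect to compactly supported perturbations, and locally
`s`-minimal set all coincide. -/
theorem sMinimal_iff_locSMinimal
    (n : ℕ) (hn : 1 ≤ n) (s : ℝ) (hs : s ∈ Set.Ioo (0 : ℝ) 1)
    (Ω : Set (EuclideanSpace ℝ (Fin n))) (hΩo : IsOpen Ω) (hΩb : IsBounded Ω)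
    (hΩlip : HasLipschitzBoundary Ω)
    (E : Set (EuclideanSpace ℝ (Fin n))) (hE : MeasurableSet E) :
    (SMinimal n s E Ω ↔
      (Ps n s E Ω < ⊤ ∧ ∀ F : Set (EuclideanSpace ℝ (Fin n)), MeasurableSet F →
        IsCompact (closure (E ∆ F)) → closure (E ∆ F) ⊆ Ω → Ps n s E Ω ≤ Ps n s F Ω))
    ∧ (SMinimal n s E Ω ↔ LocSMinimal n s E Ω) := by
  have hne : (Ωᶜ).Nonempty := by
    rw [nonempty_compl]
    rintro rfl
    have : Nonempty (Fin n) := ⟨⟨0, hn⟩⟩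
    exact NormedSpace.unbounded_univ ℝ (EuclideanSpace ℝ (Fin n)) hΩb
  obtain ⟨C, hCt, hC⟩ := kernel_bound n hn s hs
  have hw := weight_finite hs hne hΩo hΩb hΩlip
  have hper : kap n s (Ω ×ˢ Ωᶜ) < ⊤ :=
    lt_of_le_of_lt (exterior_bound n s C hC Ω hΩo hne)
      (ENNReal.mul_lt_top (lt_top_iff_ne_top.2 hCt) hw)
  obtain ⟨t, ht, hlim⟩ := good_levels hs C hCt hC hne hΩo hw
  refine ⟨⟨fun H => ⟨H.1, fun F hF _ hsub => H.2 F hF ?_⟩, fun H => ?_⟩, fun H => ?_, fun H => ?_⟩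
  · have : (F \ Ω) ∆ (E \ Ω) = ∅ := by
      rw [eq_empty_iff_forall_notMem]
      intro x
      have hx : x ∈ E ∆ F → x ∈ Ω := fun h => hsub (subset_closure h)
      simp only [mem_symmDiff, Set.mem_sdiff] at hx ⊢
      tauto
    rw [this, measure_empty]
  · exact compact_pert_minimal hE hΩo hΩb hne t ht hlim H.1 H.2
  · intro Ω' hΩ'o _ hsub
    exact H.mono hE hΩo.measurableSet hΩ'o.measurableSet (subset_closure.trans hsub)
  · exact compact_pert_minimal hE hΩo hΩb hne t ht hlim
      (loc_finite hE hΩo hΩb hne t ht hlim hper H) (fun F hF hc hs' => H.compact_pert hE hΩo F hF hc hs')
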